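/- arXiv:2512.19044 — 4 statements merged into one kernel-verified Lean document; each statement's English description precedes it below -/
import Mathlib

section
/- Let G be a graph that has a region representation v ↦ H_v over a graph H that is 3-acyclic. If K is a finite clique of G, then the subtrees H_v for v ∈ K have a common vertex, i.e., ⋂_{v∈K} H_v is nonempty. -/
open SimpleGraph

/-- A region representation of `G` over `H`: each vertex gets a nonempty connected
subgraph (region) of `H`, and two distinct vertices are adjacent in `G` iff their
regions share a vertex. -/
def IsRegionRep {V W : Type*} (G : SimpleGraph V) (H : SimpleGraph W)
    (f : V → H.Subgraph) : Prop :=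
  (∀ v, (f v).Connected) ∧
  ∀ u v : V, u ≠ v → (G.Adj u v ↔ ((f u).verts ∩ (f v).verts).Nonempty)

/-- The representation is `r`-acyclic: the union of the regions of any at most `r`
vertices is acyclic. -/
def RepAcyclic {V W : Type*} (H : SimpleGraph W) (f : V → H.Subgraph) (r : ℕ) : Prop :=
  ∀ X : Finset V, X.card ≤ r → (⨆ x ∈ X, f x).coe.IsAcyclic

theorem aux_unique {W : Type*} {H : SimpleGraph W} {M : H.Subgraph} (hM : M.coe.IsAcyclic)
    {u v : W} {p q : H.Walk u v} (hp : p.IsPath) (hq : q.IsPath)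
    (hpM : p.toSubgraph ≤ M) (hqM : q.toSubgraph ≤ M) : p = q := by
  have key : ∀ r : H.Walk u v, r.IsPath → r.toSubgraph ≤ M →
      ∀ (hu : u ∈ M.verts) (hv : v ∈ M.verts),
      ∃ r' : M.coe.Walk ⟨u, hu⟩ ⟨v, hv⟩, r'.IsPath ∧ r'.map M.hom = r := by
    intro r hr hrM hu hv
    have e : (r.mapToSubgraph.map (Subgraph.inclusion hrM)).map M.hom = r := by
      rw [Walk.map_map]
      exact Walk.map_mapToSubgraph_hom r
    refine ⟨r.mapToSubgraph.map (Subgraph.inclusion hrM), ?_, e⟩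
    exact Walk.IsPath.of_map (f := M.hom) ((congrArg Walk.IsPath e).mpr hr)
  have hu : u ∈ M.verts := hpM.1 p.start_mem_verts_toSubgraph
  have hv : v ∈ M.verts := hpM.1 p.end_mem_verts_toSubgraph
  obtain ⟨p', hp', ep⟩ := key p hp hpM hu hv
  obtain ⟨q', hq', eq⟩ := key q hq hqM hu hv
  have h := (hM.subsingleton_path _ _).elim ⟨p', hp'⟩ ⟨q', hq'⟩
  have h' : p' = q' := congrArg Subtype.val h
  rw [← ep, ← eq, h']

theorem aux_path {W : Type*} {H : SimpleGraph W} {A : H.Subgraph} (hA : A.Connected)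
    {u v : W} (hu : u ∈ A.verts) (hv : v ∈ A.verts) :
    ∃ p : H.Walk u v, p.IsPath ∧ p.toSubgraph ≤ A := by
  classical
  obtain ⟨p, hp⟩ := (A.connected_iff_forall_exists_walk_subgraph.1 hA).2 hu hv
  exact ⟨p.bypass, p.bypass_isPath, Walk.toSubgraph_bypass_le_toSubgraph.trans hp⟩

theorem aux_inter {W : Type*} {H : SimpleGraph W} {A B M : H.Subgraph} (hA : A.Connected)
    (hB : B.Connected) (hM : M.coe.IsAcyclic) (hAM : A ≤ M) (hBM : B ≤ M)
    (hne : (A.verts ∩ B.verts).Nonempty) : (A ⊓ B).Connected := by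
  rw [Subgraph.connected_iff_forall_exists_walk_subgraph]
  refine ⟨hne, ?_⟩
  intro u v hu hv
  obtain ⟨p, hp, hpA⟩ := aux_path hA hu.1 hv.1
  obtain ⟨q, hq, hqB⟩ := aux_path hB hu.2 hv.2
  have e := aux_unique hM hp hq (hpA.trans hAM) (hqB.trans hBM)
  subst e
  exact ⟨p, le_inf hpA hqB⟩

theorem aux_first {W : Type*} {H : SimpleGraph W} (S : Set W) {y x : W} (p : H.Walk y x)
    (hx : x ∈ S) : ∃ w ∈ S, ∃ q : H.Walk y w, q.toSubgraph ≤ p.toSubgraph ∧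
      ∀ t ∈ q.support, t ∈ S → t = w := by
  induction p with
  | nil => exact ⟨_, hx, Walk.nil, le_rfl, by simp⟩
  | @cons a b c h p ih =>
    by_cases ha : a ∈ S
    · refine ⟨a, ha, Walk.nil, ?_, by simp⟩
      simp [Walk.toSubgraph]
    · obtain ⟨w, hw, q, hq, hqS⟩ := ih hx
      refine ⟨w, hw, Walk.cons h q, ?_, ?_⟩
      · exact sup_le_sup le_rfl hq
      · intro t ht htS
        rw [Walk.support_cons, List.mem_cons] at ht
        rcases ht with rfl | ht
        · exact absurd htS ha
        · exact hqS t ht htS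

theorem aux_triple {W : Type*} {H : SimpleGraph W} {A B C M : H.Subgraph} (hA : A.Connected)
    (hB : B.Connected) (hC : C.Connected) (hM : M.coe.IsAcyclic) (hAM : A ≤ M) (hBM : B ≤ M)
    (hCM : C ≤ M) (hAB : (A.verts ∩ B.verts).Nonempty) (hBC : (B.verts ∩ C.verts).Nonempty)
    (hAC : (A.verts ∩ C.verts).Nonempty) : ∃ w, w ∈ A.verts ∧ w ∈ B.verts ∧ w ∈ C.verts := by
  classical
  obtain ⟨x, hxA, hxB⟩ := hAB
  obtain ⟨y, hyB, hyC⟩ := hBC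
  obtain ⟨z, hzA, hzC⟩ := hAC
  obtain ⟨p₀, -, hp₀⟩ := aux_path hB hyB hxB
  obtain ⟨w, hwA, p₁, hp₁, hpS⟩ := aux_first A.verts p₀ hxA
  have hpB : p₁.bypass.toSubgraph ≤ B :=
    Walk.toSubgraph_bypass_le_toSubgraph.trans (hp₁.trans hp₀)
  obtain ⟨r, hr, hrA⟩ := aux_path hA hwA hzA
  obtain ⟨q, hq, hqC⟩ := aux_path hC hyC hzC
  have hpath : (p₁.bypass.append r).IsPath := by
    rw [Walk.isPath_def, Walk.support_append, List.nodup_append']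
    refine ⟨p₁.bypass_isPath.support_nodup, hr.support_nodup.tail, ?_⟩
    intro t ht ht'
    have htA : t ∈ A.verts := hrA.1 (r.mem_verts_toSubgraph.2 (List.mem_of_mem_tail ht'))
    have htw : t = w := hpS t (p₁.support_bypass_subset_support ht) htA
    subst htw
    have hnd := hr.support_nodup
    rw [← Walk.cons_tail_support] at hnd
    exact (List.nodup_cons.1 hnd).1 ht'
  have e := aux_unique hM hpath hq
    (by rw [Walk.toSubgraph_append]; exact sup_le (hpB.trans hBM) (hrA.trans hAM))
    (hqC.trans hCM)
  refine ⟨w, hwA, hpB.1 (Walk.end_mem_verts_toSubgraph _), hqC.1 ?_⟩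
  rw [Walk.mem_verts_toSubgraph, ← e, Walk.mem_support_append_iff]
  exact Or.inl (Walk.end_mem_support _)

theorem aux_helly {V W : Type*} {H : SimpleGraph W} (K : Finset V) (hne : K.Nonempty) :
    ∀ f : V → H.Subgraph, (∀ v ∈ K, (f v).Connected) →
    (∀ u ∈ K, ∀ v ∈ K, ((f u).verts ∩ (f v).verts).Nonempty) →
    (∀ a ∈ K, ∀ b ∈ K, ∀ c ∈ K, ∃ M : H.Subgraph, M.coe.IsAcyclic ∧ f a ≤ M ∧ f b ≤ M ∧ f c ≤ M) →
    ∃ t : W, ∀ v ∈ K, t ∈ (f v).verts := by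
  classical
  induction hne using Finset.Nonempty.cons_induction with
  | singleton a =>
    intro f _ hi _
    obtain ⟨t, ht, -⟩ := hi a (by simp) a (by simp)
    exact ⟨t, by simpa using ht⟩
  | cons a s has hs ih =>
    intro f hc hi hac
    have ha : a ∈ Finset.cons a s has := by simp
    have hm : ∀ u ∈ s, u ∈ Finset.cons a s has := fun u hu => by simp [hu]
    have main : ∃ t : W, ∀ v ∈ s, t ∈ (f v ⊓ f a).verts := by
      refine ih (fun u => f u ⊓ f a) ?_ ?_ ?_
      · intro v hv
        obtain ⟨M, hM, h1, h2, -⟩ := hac v (hm v hv) a ha a ha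
        exact aux_inter (hc v (hm v hv)) (hc a ha) hM h1 h2 (hi v (hm v hv) a ha)
      · intro u hu v hv
        obtain ⟨M, hM, h1, h2, h3⟩ := hac u (hm u hu) v (hm v hv) a ha
        obtain ⟨w, wu, wv, wa⟩ := aux_triple (hc u (hm u hu)) (hc v (hm v hv)) (hc a ha) hM h1 h2 h3
          (hi u (hm u hu) v (hm v hv)) (hi v (hm v hv) a ha) (hi u (hm u hu) a ha)
        exact ⟨w, ⟨wu, wa⟩, ⟨wv, wa⟩⟩
      · intro b hb c hc' d hd
        obtain ⟨M, hM, h1, h2, h3⟩ := hac b (hm b hb) c (hm c hc') d (hm d hd)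
        exact ⟨M, hM, inf_le_left.trans h1, inf_le_left.trans h2, inf_le_left.trans h3⟩
    · obtain ⟨t, ht⟩ := main
      refine ⟨t, fun v hv => ?_⟩
      rcases Finset.mem_cons.1 hv with rfl | hv
      · obtain ⟨b, hb⟩ := hs
        exact (ht b hb).2
      · exact (ht v hv).1

/-- if `G` has a 3-acyclic region representation and `K` is a (nonempty)
finite clique of `G`, then the regions of the vertices of `K` have a common vertex. -/
theorem stmt7 {V W : Type*} (G : SimpleGraph V) (H : SimpleGraph W) (f : V → H.Subgraph)
    (hrep : IsRegionRep G H f) (h3 : RepAcyclic H f 3)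
    (K : Finset V) (hK : G.IsClique (↑K : Set V)) (hKne : K.Nonempty) :
    ∃ t : W, ∀ v ∈ K, t ∈ (f v).verts := by
  classical
  refine aux_helly K hKne f (fun v _ => hrep.1 v) ?_ ?_
  · intro u hu v hv
    by_cases huv : u = v
    · subst huv
      rw [Set.inter_self]
      exact ((Subgraph.connected_iff_forall_exists_walk_subgraph _).1 (hrep.1 u)).1
    · exact (hrep.2 u v huv).1 (hK hu hv huv)
  · intro a _ b _ c _
    refine ⟨_, h3 {a, b, c} Finset.card_le_three, ?_, ?_, ?_⟩
    · exact le_iSup₂_of_le a (by simp) le_rfl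
    · exact le_iSup₂_of_le b (by simp) le_rfl
    · exact le_iSup₂_of_le c (by simp) le_rfl
end

section
/- Let v ↦ H_v be a 3-acyclic region representation of a graph G over a graph H. Then G is chordal if and only if the union ⋃_{v∈V(G)} H_v is acyclic. -/
open SimpleGraph

/-- A graph is chordal if every cycle of length at least 4 has a chord: an edge of the
graph between two vertices of the cycle that is not an edge of the cycle. -/
def Chordal {V : Type*} (G : SimpleGraph V) : Prop :=
  ∀ (v : V) (w : G.Walk v v), w.IsCycle → 4 ≤ w.length →
    ∃ a b, a ∈ w.support ∧ b ∈ w.support ∧ G.Adj a b ∧ ¬ w.toSubgraph.Adj a b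

/-- Sum of a `ZMod 2`-valued edge weight along a walk. -/
noncomputable def wsum {V : Type*} {G : SimpleGraph V} (c : V → V → ZMod 2) {u v : V}
    (p : G.Walk u v) : ZMod 2 :=
  (p.darts.map (fun d => c d.fst d.snd)).sum

section wsum
variable {V : Type*} {G : SimpleGraph V} (c : V → V → ZMod 2)

@[simp] lemma wsum_nil (u : V) : wsum c (Walk.nil : G.Walk u u) = 0 := by simp [wsum]

@[simp] lemma wsum_cons {u v w : V} (h : G.Adj u v) (p : G.Walk v w) :
    wsum c (Walk.cons h p) = c u v + wsum c p := by simp [wsum]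

@[simp] lemma wsum_append {u v w : V} (p : G.Walk u v) (q : G.Walk v w) :
    wsum c (p.append q) = wsum c p + wsum c q := by simp [wsum]

lemma wsum_reverse (hs : ∀ u v, G.Adj u v → c u v = c v u) {u v : V} (p : G.Walk u v) :
    wsum c p.reverse = wsum c p := by
  induction p with
  | nil => simp
  | cons h p ih => simp [ih, hs _ _ h, add_comm]

lemma wsum_rotate [DecidableEq V] {u v : V} (p : G.Walk v v) (h : u ∈ p.support) :
    wsum c (p.rotate u h) = wsum c p := by
  have := (p.rotate_darts u h).perm
  exact (this.map _).sum_eq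

lemma wsum_pot (g : V → ZMod 2) (hg : ∀ u v, G.Adj u v → c u v = g u + g v) {u v : V}
    (p : G.Walk u v) : wsum c p = g u + g v := by
  induction p with
  | nil => simp [CharTwo.add_self_eq_zero]
  | cons h p ih =>
    rw [wsum_cons, ih, hg _ _ h]
    generalize g _ = a, g _ = b, g _ = d
    revert a b d; decide

lemma wsum_bypass [DecidableEq V] (n : ℕ)
    (hn : ∀ (v : V) (w : G.Walk v v), w.length ≤ n → wsum c w = 0) {u v : V}
    (p : G.Walk u v) (hp : p.length ≤ n) : wsum c p.bypass = wsum c p := by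
  induction p with
  | nil => simp [Walk.bypass]
  | @cons u v w h p ih =>
    have ih' := ih (by simp at hp; omega)
    rw [Walk.bypass]
    by_cases hu : u ∈ p.bypass.support
    · simp only [hu, dif_pos]
      have h1 := p.bypass.take_spec hu
      have h2 := congrArg (wsum c) h1
      rw [wsum_append] at h2
      have h3 := hn u (Walk.cons h (p.bypass.takeUntil u hu)) (by
        have := p.bypass.length_takeUntil_le_length hu
        have := p.length_bypass_le_length
        simp at hp ⊢; omega)
      rw [wsum_cons] at h3
      rw [wsum_cons, ← ih', ← h2, ← add_assoc, h3, zero_add]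
    · simp only [hu, dif_neg, not_false_eq_true, wsum_cons, ih']

lemma wsum_closed (hs : ∀ u v, G.Adj u v → c u v = c v u)
    (hc : ∀ (v : V) (w : G.Walk v v), w.IsCycle →
      (∀ (v' : V) (w' : G.Walk v' v'), w'.length < w.length → wsum c w' = 0) → wsum c w = 0)
    (v : V) (w : G.Walk v v) : wsum c w = 0 := by
  classical
  induction hn : w.length using Nat.strong_induction_on generalizing v w with
  | _ n ih =>
  subst hn
  cases w with
  | nil => simp
  | @cons _ u _ h p =>
    have hb : wsum c p.bypass = wsum c p := wsum_bypass c p.length (fun v' w' hl =>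
      ih w'.length (by simp; omega) v' w' rfl) p le_rfl
    have hl := p.length_bypass_le_length
    rw [wsum_cons, ← hb, ← wsum_cons c h]
    have hpath := p.bypass_isPath
    generalize p.bypass = q at *
    by_cases h3 : 3 ≤ (Walk.cons h q).length
    · apply hc
      · rw [Walk.isCycle_iff_isPath_tail_and_le_length]
        exact ⟨by simpa using hpath, h3⟩
      · intro v' w' hw'
        exact ih w'.length (by simp at hw' ⊢; omega) v' w' rfl
    · cases q with
      | nil => exact (h.ne rfl).elim
      | cons h' q =>
        cases q with
        | nil =>
          simp only [wsum_cons, wsum_nil, add_zero]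
          rw [hs _ _ h, CharTwo.add_self_eq_zero]
        | cons h'' q => simp at h3

lemma exists_pot (hs : ∀ u v, G.Adj u v → c u v = c v u)
    (hc : ∀ (v : V) (w : G.Walk v v), wsum c w = 0) :
    ∃ g : V → ZMod 2, ∀ u v, G.Adj u v → c u v = g u + g v := by
  let r : V → V := fun v => (G.connectedComponentMk v).out
  have hr : ∀ v, G.Reachable (r v) v := fun v =>
    ConnectedComponent.exact (Quot.out_eq (G.connectedComponentMk v))
  refine ⟨fun v => wsum c (hr v).some, fun u v h => ?_⟩
  have hruv : r u = r v := by
    have : G.connectedComponentMk u = G.connectedComponentMk v :=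
      ConnectedComponent.sound h.reachable
    simp only [r, this]
  have key : ∀ (a b : V) (_ : a = b) (p : G.Walk a u) (q : G.Walk b v),
      c u v = wsum c p + wsum c q := by
    rintro a _ rfl p q
    have := hc a (p.append (Walk.cons h q.reverse))
    rw [wsum_append, wsum_cons, wsum_reverse c hs] at this
    revert this
    generalize wsum c p = x, wsum c q = y, c u v = z
    revert x y z; decide
  exact key _ _ hruv _ _

lemma chordal_closed (hG : Chordal G) (hs : ∀ u v, G.Adj u v → c u v = c v u)
    (ht : ∀ u v w, G.Adj u v → G.Adj v w → G.Adj w u → c u v + c v w + c w u = 0)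
    (v : V) (w : G.Walk v v) : wsum c w = 0 := by
  classical
  refine wsum_closed c hs (fun v w hw ih => ?_) v w
  by_cases h4 : 4 ≤ w.length
  · obtain ⟨a, b, ha, hb, hab, hnot⟩ := hG v w hw h4
    rw [Walk.adj_toSubgraph_iff_mem_edges] at hnot
    rw [← wsum_rotate c w ha]
    have hb' : b ∈ (w.rotate a ha).support := by
      rw [← Walk.mem_verts_toSubgraph, Walk.toSubgraph_rotate, Walk.mem_verts_toSubgraph]
      exact hb
    have hnot' : s(a, b) ∉ (w.rotate a ha).edges := by
      rw [← Walk.adj_toSubgraph_iff_mem_edges, Walk.toSubgraph_rotate,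
        Walk.adj_toSubgraph_iff_mem_edges]
      exact hnot
    have hlen : (w.rotate a ha).length = w.length := by
      have := (w.rotate_darts a ha).perm.length_eq
      simpa using this
    rw [← hlen] at ih
    generalize w.rotate a ha = w' at *
    have hspec := w'.take_spec hb'
    generalize w'.takeUntil b hb' = p at *
    generalize w'.dropUntil b hb' = q at *
    subst hspec
    have hp : 2 ≤ p.length := by
      by_contra hlt
      cases p with
      | nil => exact hab.ne rfl
      | cons h p => cases p with
        | nil => simp at hnot'
        | cons h' p => simp at hlt
    have hq : 2 ≤ q.length := by
      by_contra hlt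
      cases q with
      | nil => exact hab.ne rfl
      | cons h q => cases q with
        | nil => simp [Sym2.eq_swap] at hnot'
        | cons h' p => simp at hlt
    have h1 := ih b (Walk.cons hab.symm p) (by simp; omega)
    have h2 := ih a (Walk.cons hab q) (by simp; omega)
    rw [wsum_cons] at h1 h2
    rw [wsum_append]
    rw [hs _ _ hab] at h2
    revert h1 h2
    generalize wsum c p = x, wsum c q = y, c b a = z
    revert x y z; decide
  · have h3 := hw.three_le_length
    cases w with
    | nil => simp
    | cons h w => cases w with
      | nil => simp at h3
      | cons h' w => cases w with
        | nil => simp at h3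
        | cons h'' w => cases w with
          | nil => simpa [add_assoc] using ht _ _ _ h h' h''
          | cons h''' w => simp at h4
end wsum

section forward
variable {V W : Type*} {G : SimpleGraph V} {H : SimpleGraph W}

lemma acyclic_pot (K : H.Subgraph) (hK : K.coe.IsAcyclic) (φ : W → W → ZMod 2)
    (hφ : ∀ x y, φ x y = φ y x) :
    ∃ ψ : W → ZMod 2, ∀ x y, K.Adj x y → φ x y = ψ x + ψ y := by
  classical
  obtain ⟨g, hg⟩ := exists_pot (G := K.coe) (fun x y => φ x y) (fun x y _ => hφ x y)
    (wsum_closed _ (fun x y _ => hφ x y) (fun v w hw _ => (hK w hw).elim))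
  refine ⟨fun x => if h : x ∈ K.verts then g ⟨x, h⟩ else 0, fun x y h => ?_⟩
  have := hg ⟨x, h.fst_mem⟩ ⟨y, h.snd_mem⟩ h
  simpa [h.fst_mem, h.snd_mem] using this

lemma pot_const (K : H.Subgraph) (hK : K.Connected) (φ : W → W → ZMod 2) (ψ ψ' : W → ZMod 2)
    (h : ∀ x y, K.Adj x y → φ x y = ψ x + ψ y) (h' : ∀ x y, K.Adj x y → φ x y = ψ' x + ψ' y) :
    ∃ k, ∀ x ∈ K.verts, ψ x = ψ' x + k := by
  obtain ⟨x0, hx0⟩ := hK.nonempty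
  refine ⟨ψ x0 + ψ' x0, fun x hx => ?_⟩
  obtain ⟨p⟩ := hK.coe.preconnected ⟨x0, hx0⟩ ⟨x, hx⟩
  have h1 := wsum_pot (G := K.coe) (fun x y => φ x y) (fun x => ψ x)
    (fun u v huv => h _ _ huv) p
  have h2 := wsum_pot (G := K.coe) (fun x y => φ x y) (fun x => ψ' x)
    (fun u v huv => h' _ _ huv) p
  rw [h1] at h2
  revert h2
  dsimp only
  generalize ψ x = a, ψ x0 = b, ψ' x = d, ψ' x0 = e
  revert a b d e; decide

lemma forward (f : V → H.Subgraph)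
    (hrep : IsRegionRep G H f) (h3 : RepAcyclic H f 3) (hG : Chordal G) :
    (⨆ v, f v).coe.IsAcyclic := by
  classical
  intro v0 w hw
  cases w with
  | nil => simp at hw
  | @cons _ v1 _ hadj p =>
  rw [Walk.cons_isCycle_iff] at hw
  let φ : W → W → ZMod 2 := fun x y => if s(x, y) = s((v0 : W), (v1 : W)) then 1 else 0
  have hφ : ∀ x y, φ x y = φ y x := fun x y => by simp only [φ, Sym2.eq_swap]
  have hX : ∀ X : Finset V, X.card ≤ 3 → ∃ ψ : W → ZMod 2,
      ∀ v ∈ X, ∀ x y, (f v).Adj x y → φ x y = ψ x + ψ y := by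
    intro X hXc
    obtain ⟨ψ, hψ⟩ := acyclic_pot _ (h3 X hXc) φ hφ
    refine ⟨ψ, fun v hv x y h => hψ x y ?_⟩
    have : f v ≤ ⨆ x ∈ X, f x := le_iSup₂_of_le v hv le_rfl
    exact this.2 h
  have h1 : ∀ v, ∃ ψ : W → ZMod 2, ∀ x y, (f v).Adj x y → φ x y = ψ x + ψ y := by
    intro v
    obtain ⟨ψ, hψ⟩ := hX {v} (by simp)
    exact ⟨ψ, hψ v (by simp)⟩
  choose ψ hψ using h1
  have hk : ∀ X : Finset V, X.card ≤ 3 → ∃ k : V → ZMod 2, ∀ u ∈ X, ∀ v ∈ X,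
      ∀ x ∈ (f u).verts, x ∈ (f v).verts → ψ u x + ψ v x = k u + k v := by
    intro X hXc
    obtain ⟨θ, hθ⟩ := hX X hXc
    have : ∀ u, ∃ k, u ∈ X → ∀ x ∈ (f u).verts, θ x = ψ u x + k := by
      intro u
      by_cases hu : u ∈ X
      · obtain ⟨k, hk⟩ := pot_const (f u) (hrep.1 u) φ θ (ψ u) (hθ u hu) (hψ u)
        exact ⟨k, fun _ => hk⟩
      · exact ⟨0, fun h => (hu h).elim⟩
    choose k hk using this
    refine ⟨k, fun u hu v hv x hxu hxv => ?_⟩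
    have e1 := hk u hu x hxu
    have e2 := hk v hv x hxv
    rw [e1] at e2
    revert e2
    generalize ψ u x = a, ψ v x = b, k u = d, k v = e
    revert a b d e; decide
  have hcex : ∀ u v, ∃ k, ∀ x ∈ (f u).verts, x ∈ (f v).verts → ψ u x + ψ v x = k := by
    intro u v
    obtain ⟨k, hk⟩ := hk {u, v} (Finset.card_le_two.trans (by norm_num))
    exact ⟨k u + k v, hk u (by simp) v (by simp)⟩
  choose c hc using hcex
  have hmeet : ∀ u v, G.Adj u v → ∃ x, x ∈ (f u).verts ∧ x ∈ (f v).verts :=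
    fun u v h => (hrep.2 u v h.ne).1 h
  have hs : ∀ u v, G.Adj u v → c u v = c v u := by
    intro u v h
    obtain ⟨x, hu, hv⟩ := hmeet u v h
    rw [← hc u v x hu hv, ← hc v u x hv hu, add_comm]
  have ht : ∀ u v w, G.Adj u v → G.Adj v w → G.Adj w u → c u v + c v w + c w u = 0 := by
    intro u v w huv hvw hwu
    obtain ⟨k, hk⟩ := hk {u, v, w} Finset.card_le_three
    obtain ⟨x, hx, hx'⟩ := hmeet u v huv
    obtain ⟨y, hy, hy'⟩ := hmeet v w hvw
    obtain ⟨z, hz, hz'⟩ := hmeet w u hwu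
    rw [← hc u v x hx hx', ← hc v w y hy hy', ← hc w u z hz hz',
      hk u (by simp) v (by simp) x hx hx', hk v (by simp) w (by simp) y hy hy',
      hk w (by simp) u (by simp) z hz hz']
    generalize k u = a, k v = b, k w = d
    revert a b d; decide
  obtain ⟨g, hg⟩ := exists_pot c hs (chordal_closed c hG hs ht)
  have hΨ : ∀ x, ∃ t, ∀ v, x ∈ (f v).verts → t = ψ v x + g v := by
    intro x
    by_cases hx : ∃ v, x ∈ (f v).verts
    · obtain ⟨v, hv⟩ := hx
      refine ⟨ψ v x + g v, fun u hu => ?_⟩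
      by_cases huv : u = v
      · rw [huv]
      · have h := (hrep.2 u v huv).2 ⟨x, hu, hv⟩
        have e1 := hg u v h
        rw [← hc u v x hu hv] at e1
        revert e1
        generalize ψ u x = a, ψ v x = b, g u = d, g v = e
        revert a b d e; decide
    · exact ⟨0, fun v hv => (hx ⟨v, hv⟩).elim⟩
  choose Ψ hΨ using hΨ
  have hfin : ∀ x y, (⨆ v, f v).Adj x y → φ x y = Ψ x + Ψ y := by
    intro x y h
    obtain ⟨v, hv⟩ := Subgraph.iSup_adj.1 h
    rw [hψ v x y hv, hΨ x v hv.fst_mem, hΨ y v hv.snd_mem]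
    generalize ψ v x = a, ψ v y = b, g v = d
    revert a b d; decide
  have htot := wsum_pot (G := (⨆ v, f v).coe) (fun x y => φ x y) (fun x => Ψ x)
    (fun u v huv => hfin _ _ huv) (Walk.cons hadj p)
  rw [CharTwo.add_self_eq_zero, wsum_cons] at htot
  have hp0 : wsum (fun x y : (⨆ v, f v).verts => φ x y) p = 0 := by
    apply List.sum_eq_zero
    intro t ht
    obtain ⟨d, hd, rfl⟩ := List.mem_map.1 ht
    simp only [φ]
    rw [if_neg]
    intro he
    apply hw.2
    have : s(v0, v1) = d.edge := by
      apply Sym2.map.injective Subtype.val_injective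
      rw [Sym2.map_mk]
      exact he.symm
    rw [this]
    exact List.mem_map_of_mem hd
  rw [hp0] at htot
  simp [φ] at htot
end forward

section backward
variable {V W : Type*} {G : SimpleGraph V} {H : SimpleGraph W}

lemma walk_union_connected (f : V → H.Subgraph) (hrep : IsRegionRep G H f) {u v : V}
    (p : G.Walk u v) : (⨆ x ∈ p.support, f x).Connected := by
  induction p with
  | nil => simpa using hrep.1 _
  | @cons u v w h p ih =>
    have : (⨆ x ∈ (Walk.cons h p).support, f x) = f u ⊔ ⨆ x ∈ p.support, f x := by
      simp [iSup_or, iSup_sup_eq]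
    rw [this]
    obtain ⟨x, hx, hx'⟩ := (hrep.2 u v h.ne).1 h
    refine Subgraph.connected_sup (hrep.1 u).preconnected ih.preconnected ⟨x, hx, ?_⟩
    exact (le_iSup₂_of_le (f := fun x (_ : x ∈ p.support) => f x) v
      p.start_mem_support le_rfl).1 hx'

lemma backward (f : V → H.Subgraph)
    (hrep : IsRegionRep G H f) (hU : (⨆ v, f v).coe.IsAcyclic) : Chordal G := by
  classical
  intro v0 w hw h4
  by_contra hno
  have hch : ∀ a b, a ∈ w.support → b ∈ w.support → ∀ x, a ≠ b → x ∈ (f a).verts →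
      x ∈ (f b).verts → s(a, b) ∈ w.edges := by
    intro a b ha hb x hab hxa hxb
    by_contra hn
    exact hno ⟨a, b, ha, hb, (hrep.2 a b hab).2 ⟨x, hxa, hxb⟩, by
      rwa [Walk.adj_toSubgraph_iff_mem_edges]⟩
  clear hno
  cases w with
  | nil => simp at h4
  | @cons _ v1 _ h01 w =>
  cases w with
  | nil => simp at h4
  | @cons _ v2 _ h12 w =>
  rw [Walk.cons_isCycle_iff] at hw
  obtain ⟨q', hq'⟩ : ∃ q', q' = w.reverse := ⟨_, rfl⟩
  have hwq : w = q'.reverse := by rw [hq', Walk.reverse_reverse]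
  clear hq'
  subst hwq
  cases q' with
  | nil => simp at h4
  | @cons _ z _ h0z q =>
  obtain ⟨hpath, -⟩ := hw
  have hv2z : v2 ≠ z := by
    rintro rfl
    have := hpath.of_cons
    rw [Walk.isPath_reverse_iff] at this
    have := this.of_cons
    rw [Walk.isPath_iff_eq_nil] at this
    subst this
    simp at h4
  have hv1 : v1 ∉ q.support ∧ v1 ≠ v0 := by
    have := (Walk.cons_isPath_iff _ _).1 hpath
    have := this.2
    simp at this
    tauto
  have hv0 : v0 ∉ q.support := by
    have := hpath.of_cons
    rw [Walk.isPath_reverse_iff, Walk.cons_isPath_iff] at this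
    exact this.2
  have hzq : z ∈ q.support := q.start_mem_support
  have h2q : v2 ∈ q.support := q.end_mem_support
  have c0 : ∀ b ∈ q.support, ∀ x ∈ (f v0).verts, x ∈ (f b).verts → b = z := by
    intro b hb x h0 hbx
    have hne : v0 ≠ b := fun h => hv0 (h ▸ hb)
    have hb1 : b ≠ v1 := fun h => hv1.1 (h ▸ hb)
    have he := hch v0 b (by simp) (by simp [hb]) x hne h0 hbx
    have hq : s(v0, b) ∉ q.edges := fun h => hv0 (q.fst_mem_support_of_mem_edges h)
    simp only [Walk.edges_cons, Walk.edges_reverse, List.mem_cons, List.mem_reverse,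
      Sym2.eq_iff] at he
    grind
  have c1 : ∀ b ∈ q.support, ∀ x ∈ (f v1).verts, x ∈ (f b).verts → b = v2 := by
    intro b hb x h0 hbx
    have hne : v1 ≠ b := fun h => hv1.1 (h ▸ hb)
    have hb0 : b ≠ v0 := fun h => hv0 (h ▸ hb)
    have he := hch v1 b (by simp) (by simp [hb]) x hne h0 hbx
    have hq : s(v1, b) ∉ q.edges := fun h => hv1.1 (q.fst_mem_support_of_mem_edges h)
    simp only [Walk.edges_cons, Walk.edges_reverse, List.mem_cons, List.mem_reverse,
      Sym2.eq_iff] at he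
    grind
  -- the two connected pieces
  obtain ⟨m, hm0, hm1⟩ := (hrep.2 v0 v1 h01.ne).1 h01
  have hA : (f v0 ⊔ f v1).Connected := Subgraph.connected_sup (hrep.1 v0).preconnected (hrep.1 v1).preconnected ⟨m, hm0, hm1⟩
  have hB := walk_union_connected f hrep q
  have hAU : f v0 ⊔ f v1 ≤ ⨆ v, f v := sup_le (le_iSup f v0) (le_iSup f v1)
  have hBU : (⨆ x ∈ q.support, f x) ≤ ⨆ v, f v := iSup₂_le fun x _ => le_iSup f x
  have hBx : ∀ x, x ∈ (⨆ x ∈ q.support, f x).verts ↔ ∃ b ∈ q.support, x ∈ (f b).verts := by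
    intro x; simp
  obtain ⟨s, hs0, hsz⟩ := (hrep.2 v0 z h0z.ne).1 h0z
  obtain ⟨t, ht1, ht2⟩ := (hrep.2 v1 v2 h12.ne).1 h12
  have hsA : s ∈ (f v0 ⊔ f v1).verts := Or.inl hs0
  have htA : t ∈ (f v0 ⊔ f v1).verts := Or.inr ht1
  have hsB := (hBx s).2 ⟨z, hzq, hsz⟩
  have htB := (hBx t).2 ⟨v2, h2q, ht2⟩
  obtain ⟨pA⟩ := hA.coe.preconnected ⟨s, hsA⟩ ⟨t, htA⟩
  obtain ⟨pB⟩ := hB.coe.preconnected ⟨s, hsB⟩ ⟨t, htB⟩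
  have heq := hU.path_unique
    (pA.toPath.map (Subgraph.inclusion hAU) (Subgraph.inclusion.injective hAU))
    (pB.toPath.map (Subgraph.inclusion hBU) (Subgraph.inclusion.injective hBU))
  have hsup : ∀ x ∈ pA.toPath.1.support,
      ∃ b ∈ q.support, (x : W) ∈ (f b).verts := by
    intro x hx
    have hx' : Subgraph.inclusion hAU x ∈ (pA.toPath.map (Subgraph.inclusion hAU)
        (Subgraph.inclusion.injective hAU)).1.support := by
      rw [SimpleGraph.Path.map_coe, Walk.support_map]
      exact List.mem_map_of_mem hx
    have hx' : Subgraph.inclusion hAU x ∈ (pB.toPath.map (Subgraph.inclusion hBU)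
        (Subgraph.inclusion.injective hBU)).1.support :=
      (congrArg (fun r => Subgraph.inclusion hAU x ∈ r.1.support) heq).mp hx'
    rw [SimpleGraph.Path.map_coe, Walk.support_map] at hx'
    obtain ⟨y, -, hy⟩ := List.mem_map.1 hx'
    have : (y : W) = x := congrArg Subtype.val hy
    rw [← this]
    exact (hBx y).1 y.2
  have htS : ¬ (t ∈ (f v0).verts ∧ t ∈ (f z).verts) := by
    rintro ⟨h0, -⟩
    exact hv2z (c0 v2 h2q t h0 ht2)
  obtain ⟨d, hd, ⟨hx0, hxz⟩, hy⟩ := pA.toPath.1.exists_boundary_dart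
    {x | (x : W) ∈ (f v0).verts ∧ (x : W) ∈ (f z).verts} ⟨hs0, hsz⟩ htS
  obtain ⟨b, hb, hyb⟩ := hsup d.snd (Walk.dart_snd_mem_support_of_mem_darts _ hd)
  have hadj : (f v0 ⊔ f v1).Adj d.fst d.snd := d.adj
  rcases hadj with h | h
  · exact hy ⟨h.snd_mem, c0 b hb _ h.snd_mem hyb ▸ hyb⟩
  · exact hv2z (c1 z hzq _ h.fst_mem hxz).symm
end backward

/-- for a 3-acyclic region representation of `G`, the graph `G` is
chordal iff the union of all regions is acyclic. -/
theorem stmt10 {V W : Type*} (G : SimpleGraph V) (H : SimpleGraph W) (f : V → H.Subgraph)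
    (hrep : IsRegionRep G H f) (h3 : RepAcyclic H f 3) :
    Chordal G ↔ (⨆ v, f v).coe.IsAcyclic := by
  exact ⟨forward f hrep h3, backward f hrep⟩
end

section
/- Let v ↦ H_v be a 3-acyclic region representation of a graph G over a graph H, and let X be a vertex-subset of G. Then G[X] is an induced cycle of length at least 4 if and only if X is inclusion-minimal with the property that H_X := ⋃_{x∈X} H_x contains a cycle. -/
open SimpleGraph

/-- `G[X]` is an induced cycle of length `n`: there is a cycle in `G` with support
exactly `X` such that every edge of `G` between vertices of `X` is an edge of the cycle. -/
def IsInducedCycleOn {V : Type*} (G : SimpleGraph V) (X : Set V) (n : ℕ) : Prop :=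
  ∃ (v : V) (w : G.Walk v v), w.IsCycle ∧ w.length = n ∧
    {x | x ∈ w.support} = X ∧
    ∀ a b, a ∈ X → b ∈ X → G.Adj a b → w.toSubgraph.Adj a b


lemma coe_acyclic_iff {W : Type*} {H : SimpleGraph W} (S : H.Subgraph) :
    S.coe.IsAcyclic ↔ S.spanningCoe.IsAcyclic := by
  constructor
  · intro h v w hw
    have hs : ∀ x ∈ w.support, x ∈ S.verts := by
      intro x hx
      obtain ⟨e, he, hxe⟩ := (Walk.mem_support_iff_exists_mem_edges_of_not_nil hw.not_nil).1 hx
      induction e with | h a b =>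
      have := w.adj_of_mem_edges he
      simp only [Subgraph.spanningCoe_adj] at this
      rcases Sym2.mem_iff.1 hxe with rfl | rfl
      · exact this.fst_mem
      · exact this.snd_mem
    have h' : (S.spanningCoe.induce S.verts).IsAcyclic := h
    have e := Walk.map_induce w hs
    apply h' (w.induce S.verts hs)
    refine (Walk.isCycle_map_iff_of_injective (f := (Embedding.induce (G := S.spanningCoe) S.verts).toHom)
      (Embedding.induce (G := S.spanningCoe) S.verts).injective).1 ?_
    rw [e]; exact hw
  · intro h
    exact h.embedding S.coeEmbeddingSpanningCoe

lemma reach_inf {W : Type*} {A B C : SimpleGraph W} (hC : C.IsAcyclic) (hA : A ≤ C) (hB : B ≤ C)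
    {p q : W} (h1 : A.Reachable p q) (h2 : B.Reachable p q) : (A ⊓ B).Reachable p q := by
  obtain ⟨a, ha⟩ := h1.exists_isPath
  obtain ⟨b, hb⟩ := h2.exists_isPath
  have e : a.mapLe hA = b.mapLe hB := congrArg Subtype.val
    ((hC.subsingleton_path p q).elim ⟨_, ha.mapLe hA⟩ ⟨_, hb.mapLe hB⟩)
  have e2 : a.edges = b.edges := by
    rw [← Walk.edges_mapLe_eq_edges hA, e, Walk.edges_mapLe_eq_edges]
  refine ⟨a.transfer _ ?_⟩
  intro e he
  rw [edgeSet_inf]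
  exact ⟨a.edges_subset_edgeSet he, b.edges_subset_edgeSet (e2 ▸ he)⟩

lemma reach_closed {W : Type*} {A : SimpleGraph W} (P : W → Prop)
    (hP : ∀ a b, A.Adj a b → P a → P b) {p q : W} (h : A.Reachable p q) (hp : P p) : P q := by
  obtain ⟨w⟩ := h
  induction w with
  | nil => exact hp
  | cons h _ ih => exact ih (hP _ _ h hp)

lemma sup_acyclic {W : Type*} {A B : SimpleGraph W} (hA : A.IsAcyclic) (hB : B.IsAcyclic)
    (S : Set W) (hS : ∀ a b, A.Adj a b → a ∈ S)
    (h : ∀ p ∈ S, ∀ q ∈ S, B.Reachable p q → (A ⊓ B).Reachable p q) : (A ⊔ B).IsAcyclic := by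
  rw [isAcyclic_iff_forall_adj_isBridge] at *
  intro u v huv
  rw [isBridge_iff]
  intro hr
  by_cases hAe : A.Adj u v
  · have h1 := hA hAe
    rw [isBridge_iff] at h1
    have key : ∀ s ∈ S, ∀ t ∈ S, (B.deleteEdges {s(u,v)}).Reachable s t →
        (A.deleteEdges {s(u,v)}).Reachable s t := by
      intro s hs t ht hst
      have := reach_inf (isAcyclic_iff_forall_adj_isBridge.2 hB) inf_le_right (deleteEdges_le _)
        (h s hs t ht (hst.mono (deleteEdges_le _))) hst
      refine this.mono ?_
      intro a b hab
      simp only [inf_adj, deleteEdges_adj] at hab ⊢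
      tauto
    have := reach_closed (fun w => ∃ s ∈ S, (A.deleteEdges {s(u,v)}).Reachable u s ∧
      (B.deleteEdges {s(u,v)}).Reachable s w) ?_ hr ⟨u, hS _ _ hAe, .rfl, .rfl⟩
    · obtain ⟨s, hs, h2, h3⟩ := this
      exact h1 (h2.trans (key s hs v (hS _ _ hAe.symm) h3))
    · rintro a b hab ⟨s, hs, h2, h3⟩
      rw [deleteEdges_adj, sup_adj] at hab
      rcases hab with ⟨hab | hab, hne⟩
      · refine ⟨b, hS _ _ hab.symm, ?_, .rfl⟩
        exact (h2.trans (key s hs a (hS _ _ hab) h3)).trans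
          (Adj.reachable (deleteEdges_adj.2 ⟨hab, hne⟩))
      · exact ⟨s, hs, h2, h3.trans (Adj.reachable (deleteEdges_adj.2 ⟨hab, hne⟩))⟩
  · have hBe : B.Adj u v := by
      rcases huv with h | h
      · exact absurd h hAe
      · exact h
    have h1 := hB hBe
    rw [isBridge_iff] at h1
    have := reach_closed (fun w => (B.deleteEdges {s(u,v)}).Reachable u w ∨
      ∃ s ∈ S, ∃ t ∈ S, (B.deleteEdges {s(u,v)}).Reachable u s ∧
      (B.deleteEdges {s(u,v)}).Reachable t w) ?_ hr (.inl .rfl)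
    · rcases this with h2 | ⟨s, hs, t, ht, h2, h3⟩
      · exact h1 h2
      · have h4 : B.Reachable s t := ((h2.mono (deleteEdges_le _)).symm.trans hBe.reachable).trans
          (h3.mono (deleteEdges_le _)).symm
        have h5 : (B.deleteEdges {s(u,v)}).Reachable s t := by
          refine (h s hs t ht h4).mono ?_
          intro a b hab
          rw [inf_adj] at hab
          rw [deleteEdges_adj]
          refine ⟨hab.2, ?_⟩
          intro he
          apply hAe
          rw [Set.mem_singleton_iff] at he
          rw [← mem_edgeSet, ← he]; exact hab.1
        exact h1 ((h2.trans h5).trans h3)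
    · rintro a b hab hP
      rw [deleteEdges_adj, sup_adj] at hab
      rcases hab with ⟨hab | hab, hne⟩
      · rcases hP with h2 | ⟨s, hs, t, ht, h2, h3⟩
        · exact .inr ⟨a, hS _ _ hab, b, hS _ _ hab.symm, h2, .rfl⟩
        · exact .inr ⟨s, hs, b, hS _ _ hab.symm, h2, .rfl⟩
      · have := Adj.reachable (deleteEdges_adj.2 ⟨hab, hne⟩)
        rcases hP with h2 | ⟨s, hs, t, ht, h2, h3⟩
        · exact .inl (h2.trans this)
        · exact .inr ⟨s, hs, t, ht, h2, h3.trans this⟩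

/-- The union of the regions of `Z`, as a graph on all of `W`. -/
def HU {V W : Type*} {H : SimpleGraph W} (f : V → H.Subgraph) (Z : Set V) : SimpleGraph W :=
  (⨆ x ∈ Z, f x).spanningCoe

lemma HU_adj {V W : Type*} {H : SimpleGraph W} (f : V → H.Subgraph) (Z : Set V) (a b : W) :
    (HU f Z).Adj a b ↔ ∃ z ∈ Z, (f z).Adj a b := by
  simp [HU, Subgraph.iSup_adj]

lemma HU_mono {V W : Type*} {H : SimpleGraph W} (f : V → H.Subgraph) {Z Y : Set V} (h : Z ⊆ Y) :
    HU f Z ≤ HU f Y := by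
  intro a b
  rw [HU_adj, HU_adj]
  rintro ⟨z, hz, hh⟩
  exact ⟨z, h hz, hh⟩

lemma HU_acyclic_iff {V W : Type*} {H : SimpleGraph W} (f : V → H.Subgraph) (Z : Set V) :
    (⨆ x ∈ Z, f x).coe.IsAcyclic ↔ (HU f Z).IsAcyclic := coe_acyclic_iff _

lemma HU_three {V W : Type*} {H : SimpleGraph W} {f : V → H.Subgraph} (h3 : RepAcyclic H f 3)
    (x y z : V) : (HU f {x, y, z}).IsAcyclic := by
  classical
  have := h3 {x, y, z} Finset.card_le_three
  rw [coe_acyclic_iff] at this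
  refine this.anti ?_
  intro a b
  rw [HU_adj]
  simp [Subgraph.iSup_adj]

lemma reg_reach {V W : Type*} {H : SimpleGraph W} {f : V → H.Subgraph}
    {v : V} (hc : (f v).Connected) {Z : Set V} (hv : v ∈ Z) {p q : W} (hp : p ∈ (f v).verts)
    (hq : q ∈ (f v).verts) : (HU f Z).Reachable p q := by
  have := (hc.coe.preconnected ⟨p, hp⟩ ⟨q, hq⟩).map (f v).coeEmbeddingSpanningCoe.toHom
  refine Reachable.mono ?_ this
  intro a b hab
  exact (HU_adj _ _ _ _).2 ⟨v, hv, hab⟩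

/-- Walks of `G` in `Z` give walks in the union. -/
lemma walk_reach {V W : Type*} {G : SimpleGraph V} {H : SimpleGraph W} {f : V → H.Subgraph}
    (hrep : IsRegionRep G H f) {Z : Set V} {y y' : V} (w : G.Walk y y')
    (hw : ∀ z ∈ w.support, z ∈ Z) {p q : W} (hp : p ∈ (f y).verts)
    (hq : q ∈ (f y').verts) : (HU f Z).Reachable p q := by
  induction w generalizing p with
  | nil => exact reg_reach (hrep.1 _) (hw _ (by simp)) hp hq
  | @cons a b c h w ih =>
    obtain ⟨r, hr1, hr2⟩ := (hrep.2 _ _ h.ne).1 h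
    exact (reg_reach (hrep.1 a) (hw _ (by simp)) hp hr1).trans
      (ih (fun z hz => hw z (by simp [hz])) hr2 hq)

/-- Walks in the union give walks of `G` in `Z`. -/
lemma reach_walk {V W : Type*} {G : SimpleGraph V} {H : SimpleGraph W} {f : V → H.Subgraph}
    (hrep : IsRegionRep G H f) {Z : Set V} {p q : W} (h : (HU f Z).Reachable p q)
    {y : V} (hy : y ∈ Z) (hp : p ∈ (f y).verts) : ∃ y', q ∈ (f y').verts ∧
      ∃ w : G.Walk y y', ∀ z ∈ w.support, z ∈ Z := by
  refine reach_closed (fun q => ∃ y', q ∈ (f y').verts ∧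
      ∃ w : G.Walk y y', ∀ z ∈ w.support, z ∈ Z) ?_ h ⟨y, hp, .nil, by simpa using hy⟩
  rintro a b hab ⟨y', hy', w, hw⟩
  obtain ⟨z, hz, hab⟩ := (HU_adj _ _ _ _).1 hab
  by_cases e : y' = z
  · subst e
    exact ⟨y', hab.snd_mem, w, hw⟩
  · have := (hrep.2 y' z e).2 ⟨a, hy', hab.fst_mem⟩
    refine ⟨z, hab.snd_mem, w.concat this, ?_⟩
    intro t ht
    rw [Walk.support_concat] at ht
    simp at ht
    rcases ht with ht | rfl
    · exact hw _ ht
    · exact hz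

/-- An induced cycle of length at least four yields a cycle in the union. -/
lemma cycle_not_acyclic {V W : Type*} {G : SimpleGraph V} {H : SimpleGraph W} {f : V → H.Subgraph}
    (hrep : IsRegionRep G H f) {X : Set V} {n : ℕ} (hn : 4 ≤ n) (hX : IsInducedCycleOn G X n) :
    ¬ (HU f X).IsAcyclic := by
  intro hac
  obtain ⟨x, w, hc, hlen, hsupp, hind⟩ := hX
  cases w with
  | nil => simp at hlen; omega
  | @cons _ x1 _ h0 r =>
  obtain ⟨hr, -⟩ := (Walk.cons_isCycle_iff _ _).1 hc
  rcases List.eq_nil_or_concat r.support with h | _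
  · simp at h
  obtain ⟨y, r', hy, rfl⟩ : ∃ (y : V) (r' : G.Walk x1 y) (h : G.Adj y x), r = r'.concat h := by
    cases r with
    | nil => exact absurd rfl h0.ne
    | cons h p => exact Walk.exists_cons_eq_concat h p
  obtain ⟨hr', hxr⟩ := (Walk.concat_isPath_iff _).1 hr
  have hlen' : r'.length + 2 = n := by simpa using hlen
  subst hsupp
  have hZX : ∀ z ∈ r'.support, z ∈ {z | z ∈ (Walk.cons h0 (r'.concat hy)).support} := by
    intro z hz
    simp [Walk.support_concat, hz]
  have hxX : x ∈ {z | z ∈ (Walk.cons h0 (r'.concat hy)).support} := by simp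
  have hnb : ∀ z ∈ r'.support, G.Adj x z → z = x1 ∨ z = y := by
    intro z hz hxz
    have := hind x z hxX (hZX z hz) hxz
    rw [Walk.adj_toSubgraph_iff_mem_edges, Walk.edges_cons, Walk.edges_concat] at this
    simp only [List.concat_eq_append, List.mem_cons, List.mem_append, List.not_mem_nil, or_false] at this
    rcases this with h | h | h
    · left; rw [Sym2.eq_iff] at h; clear hind hac hc hlen; grind
    · exact absurd (r'.fst_mem_support_of_mem_edges h) hxr
    · right; rw [Sym2.eq_iff] at h; clear hind hac hc hlen; grind
  have hne : x1 ≠ y := by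
    rintro rfl
    have := (Walk.isPath_iff_nil (p := r')).1 hr'
    have := Walk.length_eq_zero_iff.2 this
    omega
  have hnadj : ¬ G.Adj x1 y := by
    intro hxz
    have := hind x1 y (hZX _ (by simp)) (hZX _ (by simp)) hxz
    rw [Walk.adj_toSubgraph_iff_mem_edges, Walk.edges_cons, Walk.edges_concat] at this
    simp only [List.concat_eq_append, List.mem_cons, List.mem_append, List.not_mem_nil, or_false] at this
    have e1 := h0.ne
    have e2 := hy.ne
    rcases this with h | h | h
    · rw [Sym2.eq_iff] at h; clear hind hac hc hlen; grind
    · have := hr'.length_eq_one_of_mem_edges h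
      omega
    · rw [Sym2.eq_iff] at h; clear hind hac hc hlen; grind
  have hdis : ∀ a, a ∈ (f x1).verts → a ∈ (f y).verts → False := fun a h1 h2 =>
    hnadj ((hrep.2 _ _ hne).2 ⟨a, h1, h2⟩)
  obtain ⟨p, hp0, hp1⟩ := (hrep.2 _ _ h0.ne).1 h0
  obtain ⟨q, hq1, hq0⟩ := (hrep.2 _ _ hy.ne).1 hy
  have R1 : (HU f {x}).Reachable p q := reg_reach (hrep.1 x) (Set.mem_singleton x) hp0 hq0
  have R2 : (HU f {z | z ∈ r'.support}).Reachable p q := walk_reach hrep r' (fun z hz => hz) hp1 hq1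
  have R := reach_inf hac (HU_mono f (by simp)) (HU_mono f (Z := {z | z ∈ r'.support}) hZX) R1 R2
  refine hdis q (reach_closed (fun a => a ∈ (f x1).verts) ?_ R hp1) hq1
  intro a b hab ha
  rw [inf_adj, HU_adj, HU_adj] at hab
  obtain ⟨⟨x', hx', hab⟩, z, hz, habz⟩ := hab
  rw [Set.mem_singleton_iff] at hx'
  rw [hx'] at hab
  have hxz : G.Adj x z := by
    refine (hrep.2 _ _ ?_).2 ⟨a, hab.fst_mem, habz.fst_mem⟩
    rintro rfl
    exact hxr hz
  rcases hnb z hz hxz with rfl | rfl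
  · exact habz.snd_mem
  · exact (hdis a ha habz.fst_mem).elim

/-- An induced cycle contained in an induced cycle is equal to it. -/
lemma cycle_subset_eq {V : Type*} {G : SimpleGraph V} {X X' : Set V} {n n' : ℕ}
    (hX : IsInducedCycleOn G X n) (hX' : IsInducedCycleOn G X' n') (hsub : X' ⊆ X) : X ⊆ X' := by
  obtain ⟨v, w, hc, -, rfl, hind⟩ := hX
  obtain ⟨v', w', hc', -, rfl, hind'⟩ := hX'
  have hcl : ∀ a b, w.toSubgraph.Adj a b → a ∈ w'.support → b ∈ w'.support := by
    intro a b hab ha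
    have e : w'.toSubgraph.neighborSet a = w.toSubgraph.neighborSet a := by
      apply Set.eq_of_subset_of_ncard_le
      · intro t ht
        exact hind a t (hsub ha) (hsub ((Walk.mem_verts_toSubgraph _).1 ht.snd_mem)) ht.adj_sub
      · rw [hc.ncard_neighborSet_toSubgraph_eq_two (hsub ha),
          hc'.ncard_neighborSet_toSubgraph_eq_two ha]
      · exact w.finite_neighborSet_toSubgraph
    have : b ∈ w'.toSubgraph.neighborSet a := by rw [e]; exact hab
    exact (Walk.mem_verts_toSubgraph _).1 this.snd_mem
  intro t ht
  have hv' : v' ∈ w'.support := by simp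
  have := w.toSubgraph_connected.coe.preconnected ⟨v', (Walk.mem_verts_toSubgraph _).2 (hsub hv')⟩
    ⟨t, (Walk.mem_verts_toSubgraph _).2 ht⟩
  exact reach_closed (fun s : w.toSubgraph.verts => s.1 ∈ w'.support) (fun a b hab ha => hcl a b hab ha) this hv'

lemma exists_cycle_step {V W : Type*} {G : SimpleGraph V} {H : SimpleGraph W} {f : V → H.Subgraph}
    (hrep : IsRegionRep G H f) (h3 : RepAcyclic H f 3) {Z : Set V} {x : V} (hx : x ∉ Z)
    (hZ : (HU f Z).IsAcyclic) (hn : ¬ (HU f (insert x Z)).IsAcyclic) :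
    ∃ X' ⊆ insert x Z, ∃ n, 4 ≤ n ∧ IsInducedCycleOn G X' n := by
  classical
  obtain ⟨p, hp, q, hq, hpq, hnpq⟩ : ∃ p ∈ (f x).verts, ∃ q ∈ (f x).verts,
      (HU f Z).Reachable p q ∧ ¬ (HU f {x} ⊓ HU f Z).Reachable p q := by
    by_contra hcon
    push Not at hcon
    apply hn
    refine (sup_acyclic ?_ hZ (f x).verts ?_ hcon).anti ?_
    · have := HU_three h3 x x x
      simpa using this
    · intro a b hab
      obtain ⟨x', hx', hab'⟩ := (HU_adj _ _ _ _).1 hab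
      rw [Set.mem_singleton_iff] at hx'
      rw [hx'] at hab'
      exact hab'.fst_mem
    · intro a b hab
      obtain ⟨z, hz, hab'⟩ := (HU_adj _ _ _ _).1 hab
      rw [sup_adj, HU_adj, HU_adj]
      rcases hz with hz | hz
      · exact .inl ⟨z, hz, hab'⟩
      · exact .inr ⟨z, hz, hab'⟩
  let Bad : ℕ → Prop := fun k => ∃ (y y' : V) (w : G.Walk y y'), w.length = k ∧
    (∀ z ∈ w.support, z ∈ Z) ∧ ∃ p ∈ (f x).verts, ∃ q ∈ (f x).verts, p ∈ (f y).verts ∧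
      q ∈ (f y').verts ∧ ¬ (HU f {x} ⊓ HU f Z).Reachable p q
  have hBad : ∃ k, Bad k := by
    obtain ⟨y, hy, hpy⟩ : ∃ y ∈ Z, p ∈ (f y).verts := by
      obtain ⟨w⟩ := hpq
      cases w with
      | nil => exact absurd .rfl hnpq
      | cons h _ =>
        obtain ⟨y, hy, hh⟩ := (HU_adj _ _ _ _).1 h
        exact ⟨y, hy, hh.fst_mem⟩
    obtain ⟨y', hqy', w, hw⟩ := reach_walk hrep hpq hy hpy
    exact ⟨_, y, y', w, rfl, hw, p, hp, q, hq, hpy, hqy', hnpq⟩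
  have hmin : ∀ k, Bad k → Nat.find hBad ≤ k := fun k hk => Nat.find_min' hBad hk
  obtain ⟨y, y', w, hlen, hw, p, hp, q, hq, hpy, hqy', hnr⟩ := Nat.find_spec hBad
  clear hpq hnpq
  rw [← hlen] at hmin
  have hminw : ∀ w' : G.Walk y y', (∀ z ∈ w'.support, z ∈ Z) → w.length ≤ w'.length := 
    fun w' hw' => hmin _ ⟨y, y', w', rfl, hw', p, hp, q, hq, hpy, hqy', hnr⟩
  have hpath : w.IsPath := by
    by_contra hnp
    have h1 := hminw w.bypass (fun z hz => hw z (w.support_bypass_subset_support hz))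
    exact hnp (by
      have := w.bypass_eq_self_of_length_le_length_bypass h1
      rw [← this]; exact w.bypass_isPath)
  have hchord' : ∀ i j, i ≤ j → j ≤ w.length → G.Adj (w.getVert i) (w.getVert j) → j = i + 1 := by
    intro i j hij hj hadj
    have hij' : i ≠ j := by rintro rfl; exact hadj.ne rfl
    by_contra hne
    have := hminw ((w.take i).append (Walk.cons hadj (w.drop j))) (by
      intro z hz
      rw [Walk.mem_support_append_iff, Walk.support_cons, List.mem_cons] at hz
      apply hw
      rcases hz with hz | rfl | hz
      · exact (w.isSubwalk_take i).support_subset hz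
      · exact w.getVert_mem_support i
      · exact (w.isSubwalk_drop j).support_subset hz)
    simp only [Walk.length_append, Walk.length_cons, Walk.take_length, Walk.drop_length] at this
    omega
  have hchord : ∀ a ∈ w.support, ∀ b ∈ w.support, G.Adj a b → s(a, b) ∈ w.edges := by
    intro a ha b hb hab
    obtain ⟨i, rfl, hi⟩ := Walk.mem_support_iff_exists_getVert.1 ha
    obtain ⟨j, rfl, hj⟩ := Walk.mem_support_iff_exists_getVert.1 hb
    rw [Walk.mk_mem_edges_iff_exists]
    rcases le_total i j with hij | hij
    · have := hchord' i j hij hj hab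
      subst this
      exact ⟨i, by omega, rfl⟩
    · have := hchord' j i hij hi hab.symm
      subst this
      exact ⟨j, by omega, Sym2.eq_swap⟩
  have hint : ∀ z ∈ w.support, G.Adj x z → z = y ∨ z = y' := by
    intro z hz hxz
    by_contra hcon
    push Not at hcon
    obtain ⟨r, hrx, hrz⟩ := (hrep.2 _ _ hxz.ne).1 hxz
    by_cases hpr : (HU f {x} ⊓ HU f Z).Reachable p r
    · have hrq : ¬ (HU f {x} ⊓ HU f Z).Reachable r q := fun h => hnr (hpr.trans h)
      have := hmin _ ⟨z, y', w.dropUntil z hz, rfl,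
        fun t ht => hw t (w.support_dropUntil_subset_support hz ht), r, hrx, q, hq, hrz, hqy', hrq⟩
      have := Walk.length_dropUntil_lt_length hz hcon.1
      omega
    · have := hmin _ ⟨y, z, w.takeUntil z hz, rfl,
        fun t ht => hw t (w.support_takeUntil_subset_support hz ht), p, hp, r, hrx, hpy, hrz, hpr⟩
      have := Walk.length_takeUntil_lt_length hz hcon.2
      omega
  have hyZ : y ∈ Z := hw _ (by simp)
  have hy'Z : y' ∈ Z := hw _ (by simp)
  have hxs : x ∉ w.support := fun h => hx (hw _ h)
  have hl2 : 2 ≤ w.length := by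
    by_contra hcon
    apply hnr
    have R1 : (HU f {x}).Reachable p q := reg_reach (hrep.1 x) (Set.mem_singleton x) hp hq
    have R2 : (HU f {y, y'}).Reachable p q := by
      refine walk_reach hrep w ?_ hpy hqy'
      intro z hz
      obtain ⟨i, rfl, hi⟩ := Walk.mem_support_iff_exists_getVert.1 hz
      have : i = 0 ∨ i = w.length := by omega
      rcases this with rfl | rfl <;> simp
    refine (reach_inf (HU_three h3 x y y') (HU_mono f (by simp)) (HU_mono f (by simp)) R1 R2).mono ?_
    exact inf_le_inf_left _ (HU_mono f (by
      intro t ht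
      rcases ht with rfl | rfl
      · exact hyZ
      · exact hy'Z))
  have hyy : y ≠ y' := by
    rintro rfl
    have := Walk.length_eq_zero_iff.2 ((Walk.isPath_iff_nil (p := w)).1 hpath)
    omega
  have hxy : G.Adj x y := (hrep.2 x y (fun h => hx (h ▸ hyZ))).2 ⟨p, hp, hpy⟩
  have hxy' : G.Adj y' x := ((hrep.2 x y' (fun h => hx (h ▸ hy'Z))).2 ⟨q, hq, hqy'⟩).symm
  let c : G.Walk x x := Walk.cons hxy (w.concat hxy')
  have hcs : ∀ t, t ∈ c.support ↔ t = x ∨ t ∈ w.support := by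
    intro t
    simp only [c, Walk.support_cons, Walk.support_concat, List.mem_cons, List.concat_eq_append,
      List.mem_append, List.not_mem_nil, or_false]
    tauto
  have hce : ∀ e, e ∈ c.edges ↔ e = s(x, y) ∨ e ∈ w.edges ∨ e = s(y', x) := by
    intro e
    simp [c, Walk.edges_concat]
  refine ⟨{t | t ∈ c.support}, ?_, w.length + 2, by omega, x, c, ?_, by simp [c], rfl, ?_⟩
  · intro t ht
    rcases (hcs t).1 ht with rfl | ht
    · exact Set.mem_insert _ _
    · exact Set.mem_insert_of_mem _ (hw _ ht)
  · rw [Walk.cons_isCycle_iff]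
    refine ⟨hpath.concat hxs _, ?_⟩
    intro h
    simp only [Walk.edges_concat, List.concat_eq_append, List.mem_append, List.mem_cons,
      List.not_mem_nil, or_false] at h
    rcases h with h | h
    · exact hxs (w.fst_mem_support_of_mem_edges h)
    · rw [Sym2.eq_iff] at h
      rcases h with ⟨h, -⟩ | ⟨-, h⟩
      · exact hxy'.ne h.symm
      · exact hyy h
  · intro a b ha hb hab
    rw [Walk.adj_toSubgraph_iff_mem_edges, hce]
    rcases (hcs a).1 ha with rfl | ha' <;> rcases (hcs b).1 hb with rfl | hb'
    · exact absurd rfl hab.ne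
    · rcases hint b hb' hab with rfl | rfl
      · exact .inl rfl
      · exact .inr (.inr Sym2.eq_swap)
    · rcases hint a ha' hab.symm with rfl | rfl
      · exact .inl Sym2.eq_swap
      · exact .inr (.inr rfl)
    · exact .inr (.inl (hchord a ha' b hb' hab))

lemma exists_cycle_finset {V W : Type*} {G : SimpleGraph V} {H : SimpleGraph W} {f : V → H.Subgraph}
    (hrep : IsRegionRep G H f) (h3 : RepAcyclic H f 3) (Y : Set V) (hfin : Y.Finite) :
    ¬ (HU f Y).IsAcyclic → ∃ X' ⊆ Y, ∃ n, 4 ≤ n ∧ IsInducedCycleOn G X' n := by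
  induction Y, hfin using Set.Finite.induction_on with
  | empty =>
    intro h
    refine (h ?_).elim
    have : HU f ∅ = ⊥ := by
      ext a b
      rw [HU_adj]; simp
    rw [this]; exact isAcyclic_bot
  | @insert x Z hx _ ih =>
    intro h
    by_cases hZ : (HU f Z).IsAcyclic
    · exact exists_cycle_step hrep h3 hx hZ h
    · obtain ⟨X', h1, h2⟩ := ih hZ
      exact ⟨X', h1.trans (Set.subset_insert _ _), h2⟩

lemma exists_cycle {V W : Type*} {G : SimpleGraph V} {H : SimpleGraph W} {f : V → H.Subgraph}
    (hrep : IsRegionRep G H f) (h3 : RepAcyclic H f 3) (Y : Set V)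
    (hY : ¬ (HU f Y).IsAcyclic) : ∃ X' ⊆ Y, ∃ n, 4 ≤ n ∧ IsInducedCycleOn G X' n := by
  unfold IsAcyclic at hY
  push Not at hY
  obtain ⟨v, c, hc⟩ := hY
  have hex : ∀ e : Sym2 W, e ∈ c.edges → ∃ z ∈ Y, e ∈ (f z).edgeSet := by
    intro e he
    induction e with | h a b =>
    obtain ⟨z, hz, h⟩ := (HU_adj _ _ _ _).1 (c.adj_of_mem_edges he)
    exact ⟨z, hz, h⟩
  have : Nonempty V := ⟨(hex _ (Walk.mk_start_snd_mem_edges hc.not_nil)).choose⟩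
  choose! g hg using hex
  let T : Set V := g '' {e | e ∈ c.edges}
  have hT : T.Finite := (List.finite_toSet c.edges).image g
  have hTY : T ⊆ Y := by
    rintro _ ⟨e, he, rfl⟩
    exact (hg e he).1
  obtain ⟨X', h1, h2⟩ := exists_cycle_finset hrep h3 T hT (fun h => by
    have ht : ∀ e ∈ c.edges, e ∈ (HU f T).edgeSet := by
      intro e he
      have h1 := (hg e he).2
      have h2 : g e ∈ T := ⟨e, he, rfl⟩
      generalize g e = z at h1 h2
      induction e with | h a b =>
      exact (HU_adj _ _ _ _).2 ⟨z, h2, h1⟩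
    exact h _ (hc.transfer ht))
  exact ⟨X', h1.trans hTY, h2⟩

/-- for a 3-acyclic region representation, `G[X]` is an induced cycle of
length at least 4 iff `X` is inclusion-minimal such that `H_X` contains a cycle. -/
theorem stmt11 {V W : Type*} (G : SimpleGraph V) (H : SimpleGraph W) (f : V → H.Subgraph)
    (hrep : IsRegionRep G H f) (h3 : RepAcyclic H f 3) (X : Set V) :
    (∃ n, 4 ≤ n ∧ IsInducedCycleOn G X n) ↔
      (¬ (⨆ x ∈ X, f x).coe.IsAcyclic ∧
        ∀ Y : Set V, Y ⊂ X → (⨆ x ∈ Y, f x).coe.IsAcyclic) := by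
  simp only [HU_acyclic_iff]
  constructor
  · rintro ⟨n, hn, hX⟩
    refine ⟨cycle_not_acyclic hrep hn hX, ?_⟩
    intro Y hY
    by_contra hcon
    obtain ⟨X', hX', m, hm, hc⟩ := exists_cycle hrep h3 Y hcon
    exact hY.2 ((cycle_subset_eq hX hc (hX'.trans hY.1)).trans hX')
  · rintro ⟨h1, h2⟩
    obtain ⟨X', hX', m, hm, hc⟩ := exists_cycle hrep h3 X h1
    have : X' = X := by
      by_contra hne
      exact cycle_not_acyclic hrep hm hc (h2 X' (hX'.ssubset_of_ne hne))
    exact ⟨m, hm, this ▸ hc⟩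
end

section
/- Let G be a graph, r ≥ 1 an integer, and U a connected set of exactly r vertices of G. Then there is a vertex v ∈ U such that every u ∈ U has distance at most r/2 from v in G, and at most one u ∈ U has distance exactly r/2 from v. In particular, if r is odd, some v ∈ U has distance strictly less than r/2 from every u ∈ U. -/
open SimpleGraph

/-- Distances do not increase when passing from an induced subgraph to the graph. -/
lemma aux_dist_induce {V : Type*} (G : SimpleGraph V) (s : Set V)
    (h : (G.induce s).Connected) (x y : s) :
    G.dist x y ≤ (G.induce s).dist x y := by
  obtain ⟨p, hp⟩ := h.exists_walk_length_eq_dist x y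
  rw [← hp]
  have := G.dist_le (p.map (Embedding.induce s).toHom)
  rw [Walk.length_map] at this
  exact this

/-- Induction on the number of vertices, removing a non-cut vertex. -/
lemma aux_center (n : ℕ) : ∀ {V : Type*} [Finite V] (G : SimpleGraph V),
    Nat.card V = n + 1 → G.Connected →
    ∃ v, (∀ u, 2 * G.dist v u ≤ n + 1) ∧
      (∀ u₁ u₂, 2 * G.dist v u₁ = n + 1 → 2 * G.dist v u₂ = n + 1 → u₁ = u₂) := by
  induction n with
  | zero =>
    intro V _ G hc hG
    have hs : Subsingleton V := (Nat.card_eq_one_iff_unique.mp hc).1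
    obtain ⟨v⟩ := hG.nonempty
    refine ⟨v, fun u => ?_, fun _ _ _ _ => Subsingleton.elim _ _⟩
    rw [Subsingleton.elim u v]; simp
  | succ n ih =>
    intro V _ G hc hG
    have hnt : Nontrivial V := by
      rw [← Finite.one_lt_card_iff_nontrivial]; omega
    obtain ⟨a, ha⟩ := hG.exists_connected_induce_compl_singleton_of_finite_nontrivial
    have hc' : Nat.card ({a}ᶜ : Set V) = n + 1 := by
      have := Set.ncard_add_ncard_compl ({a} : Set V)
      rw [Set.ncard_singleton, hc] at this
      rw [Nat.card_coe_set_eq]; omega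
    obtain ⟨v, hv, hu⟩ := ih _ hc' ha
    have hD := aux_dist_induce G _ ha
    obtain ⟨w, hw⟩ := hG.preconnected.exists_adj_of_nontrivial a
    have hwa : w ∈ ({a}ᶜ : Set V) := by simpa using hw.ne'
    have hw1 : G.dist w a = 1 := dist_eq_one_iff_adj.mpr hw.symm
    have key : ∀ x : ({a}ᶜ : Set V), G.dist x a ≤ (G.induce _).dist x ⟨w, hwa⟩ + 1 := by
      intro x
      have h1 := hG.dist_triangle (u := (x : V)) (v := w) (w := a)
      have h2 := hD x ⟨w, hwa⟩
      simp only at h2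
      omega
    -- all distances at most `n + 1` suffices
    by_cases hbad : 2 * (G.induce _).dist v ⟨w, hwa⟩ = n + 1
    · obtain ⟨p, hp⟩ := ha.exists_walk_length_eq_dist v ⟨w, hwa⟩
      cases p with
      | nil => simp at hbad
      | @cons _ v' _ hadj q =>
        rw [Walk.length_cons] at hp
        have hq := dist_le q
        have hall : ∀ u, 2 * G.dist v' u ≤ n + 1 := by
          intro u
          by_cases hua : u = a
          · subst hua
            have := key v'
            omega
          · by_cases huw : u = w
            · subst huw
              have := hD v' ⟨u, hwa⟩
              simp only at this
              omega
            · have h1 := hD v' ⟨u, hua⟩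
              have h2 := hv ⟨u, hua⟩
              have h3 : 2 * (G.induce _).dist v ⟨u, hua⟩ ≠ n + 1 := fun h =>
                huw (congrArg Subtype.val (hu _ _ h hbad))
              have h4 := ha.dist_triangle (u := v') (v := v) (w := ⟨u, hua⟩)
              have h5 := dist_eq_one_iff_adj.mpr hadj.symm
              simp only at h1
              omega
        refine ⟨v', fun u => (hall u).trans (by omega), fun u₁ _ h _ => ?_⟩
        have := hall u₁
        omega
    · have hne : ∀ u, u ≠ a → 2 * G.dist v u ≤ n + 1 := fun u hua => by
        have h1 := hD v ⟨u, hua⟩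
        have h2 := hv ⟨u, hua⟩
        simp only at h1
        omega
      refine ⟨v, fun u => ?_, fun u₁ u₂ h₁ h₂ => ?_⟩
      · by_cases hua : u = a
        · subst hua
          have := key v
          have := hv ⟨w, hwa⟩
          omega
        · have := hne u hua
          omega
      · have e : ∀ u, 2 * G.dist v u = n + 1 + 1 → u = a := fun u h => by
          by_contra hua
          have := hne u hua
          omega
        rw [e _ h₁, e _ h₂]

/-- in a connected set `U` of exactly `r ≥ 1` vertices there is a vertex
`v` of distance at most `r/2` from every vertex of `U`, with at most one vertex of `U`
at distance exactly `r/2` from `v`; if `r` is odd, all distances are below `r/2`. -/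
theorem stmt14 {V : Type*} (G : SimpleGraph V) (r : ℕ) (hr : 1 ≤ r)
    (U : Finset V) (hcard : U.card = r)
    (hconn : (G.induce (↑U : Set V)).Connected) :
    ∃ v ∈ U, (∀ u ∈ U, G.Reachable v u ∧ 2 * G.dist v u ≤ r) ∧
      (∀ u₁ ∈ U, ∀ u₂ ∈ U, 2 * G.dist v u₁ = r → 2 * G.dist v u₂ = r → u₁ = u₂) ∧
      (Odd r → ∀ u ∈ U, 2 * G.dist v u < r) := by
  obtain ⟨n, rfl⟩ : ∃ n, r = n + 1 := ⟨r - 1, by omega⟩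
  obtain ⟨v, hv, hu⟩ := aux_center n (G.induce (↑U : Set V))
    (by rw [Nat.card_coe_set_eq, Set.ncard_coe_finset, hcard]) hconn
  have hD := aux_dist_induce G _ hconn
  have hle : ∀ u ∈ U, 2 * G.dist v u ≤ n + 1 := fun u h => by
    have h1 := hD v ⟨u, h⟩
    have h2 := hv ⟨u, h⟩
    simp only at h1
    omega
  refine ⟨v, v.2, fun u h => ⟨?_, hle u h⟩, fun u₁ h₁ u₂ h₂ e₁ e₂ => ?_, fun ho u h => ?_⟩
  · exact (hconn v ⟨u, h⟩).map (Embedding.induce (↑U : Set V)).toHom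
  · have e : ∀ u (h : u ∈ U), 2 * G.dist v u = n + 1 →
        2 * (G.induce (↑U : Set V)).dist v ⟨u, h⟩ = n + 1 := fun u h e => by
      have h1 := hD v ⟨u, h⟩
      have h2 := hv ⟨u, h⟩
      simp only at h1
      omega
    exact congrArg Subtype.val (hu _ _ (e _ h₁ e₁) (e _ h₂ e₂))
  · have := hle u h
    obtain ⟨k, hk⟩ := ho
    omega
end
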